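/- For every real a ≥ 1 and every real x with 0 ≤ x ≤ 1/a, one has H(x) − (1/a)·H(ax) ≥ x·(ln a − x)·log₂e. -/

import Mathlib

/-!
After division by `log₂ e` (that is, with natural logarithms) the terms in `ln x` and `ln a`
cancel exactly, and the claim becomes
`-(1 - x) ln (1 - x) + (1 / a) (1 - a x) ln (1 - a x) ≥ -x²`.
The first summand is at least `x (1 - x)` because `ln (1 - x) ≤ -x`. The second is at least `-x`
because `u ln u ≥ u - 1` for `u = 1 - a x ≥ 0`.
-/

/-- The binary entropy function `H(x) = -x·log₂ x - (1-x)·log₂(1-x)`,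
extended by `H(0) = H(1) = 0` (automatic since `logb 2 0 = 0`). -/
noncomputable def binEntropy (x : ℝ) : ℝ :=
  -x * Real.logb 2 x - (1 - x) * Real.logb 2 (1 - x)

/-- The lower bound `1 - 1 / u ≤ log u`, multiplied by `u` so that it also covers `u = 0`. -/
lemma sub_one_le_mul_log {u : ℝ} (hu : 0 ≤ u) : u - 1 ≤ u * Real.log u := by
  rcases hu.eq_or_lt with rfl | hu
  · norm_num
  · have h := mul_le_mul_of_nonneg_left (Real.one_sub_inv_le_log_of_pos hu) hu.le
    rwa [mul_sub, mul_one, mul_inv_cancel₀ hu.ne'] at h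

/-- The upper bound `log u ≤ u - 1`, multiplied by `u` so that it also covers `u = 0`. -/
lemma mul_log_le_mul_sub_one {u : ℝ} (hu : 0 ≤ u) : u * Real.log u ≤ u * (u - 1) := by
  rcases hu.eq_or_lt with rfl | hu
  · norm_num
  · exact mul_le_mul_of_nonneg_left (Real.log_le_sub_one_of_pos hu) hu.le

theorem stmt2 (a x : ℝ) (ha : 1 ≤ a) (hx0 : 0 ≤ x) (hx1 : x ≤ 1 / a) :
    binEntropy x - (1 / a) * binEntropy (a * x) ≥
      x * (Real.log a - x) * Real.logb 2 (Real.exp 1) := by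
  have ha0 : 0 < a := by linarith
  have hax : a * x ≤ 1 := by
    rw [le_div_iff₀ ha0] at hx1
    linarith
  have hx1' : x ≤ 1 := by nlinarith
  rcases hx0.eq_or_lt with rfl | hx
  · simp [binEntropy]
  have hlog : Real.log (a * x) = Real.log a + Real.log x := Real.log_mul ha0.ne' hx.ne'
  have h1 := mul_log_le_mul_sub_one (sub_nonneg.2 hx1')
  have h2 : -x ≤ (1 / a) * ((1 - a * x) * Real.log (1 - a * x)) := by
    have h := mul_le_mul_of_nonneg_left (sub_one_le_mul_log (sub_nonneg.2 hax))
      (one_div_pos.2 ha0).le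
    have e : (1 / a) * (1 - a * x - 1) = -x := by
      field_simp
      ring
    linarith
  have hlhs : binEntropy x - (1 / a) * binEntropy (a * x) =
      (x * Real.log a - (1 - x) * Real.log (1 - x)
        + (1 / a) * ((1 - a * x) * Real.log (1 - a * x))) / Real.log 2 := by
    unfold binEntropy Real.logb
    rw [hlog]
    field_simp
    ring
  have hrhs : x * (Real.log a - x) * Real.logb 2 (Real.exp 1) =
      (x * (Real.log a - x)) / Real.log 2 := by
    rw [Real.logb, Real.log_exp, mul_one_div]
  rw [ge_iff_le, hlhs, hrhs]
  exact div_le_div_of_nonneg_right (by nlinarith) (Real.log_pos one_lt_two).le
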